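/- Let $P = a_0 + a_1X + \dots + a_nX^n \in \mathbb{R}[X]$ be a real polynomial of degree $n \ge 1$ (so $a_n \neq 0$) and let $\tilde P = X^n P(1/X) = a_n + a_{n-1}X + \dots + a_0X^n$ be its reversed polynomial. Put $Q = n\,P\,P'' + (1-n)\,(P')^2 \in \mathbb{R}[X]$. Then $$ n\,\tilde P\,\tilde P'' + (1-n)\,(\tilde P')^2 = X^{2(n-2)}\, Q(1/X) $$ as an identity of Laurent polynomials in $\mathbb{R}[X,X^{-1}]$. If moreover $P > 0$ on $(0,\infty)$, then for every $x > 0$ the second derivative of $\tilde P^{1/n}$ at $x$ and the second derivative of $P^{1/n}$ at $1/x$ have the same sign (positive, zero or negative). Finally, $P$ is $\frac1n$-concave on $(0,\infty)$ if and only if $\tilde P$ is, where a function $u$ is called $\mu$-concave on $(0,\infty)$ (for $\mu > 0$) if $u > 0$ on $(0,\infty)$ and $u^\mu$ is concave on $(0,\infty)$; in particular this equivalence applies to $P$ with non-negative coefficients, for which the positivity of $P$ and of $\tilde P$ on $(0,\infty)$ is automatic. -/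

import Mathlib

/-- `u` is `μ`-concave on `s`: `u` is positive on `s` and `u ^ μ` is concave on `s`.
(On an open `s` and for `μ > 0` this forces `u` to be continuous on `s`.) -/
def MuConcaveOn (s : Set ℝ) (μ : ℝ) (u : ℝ → ℝ) : Prop :=
  (∀ x ∈ s, 0 < u x) ∧ ConcaveOn ℝ s (fun x => u x ^ μ)

open Polynomial LaurentPolynomial in
theorem toLaurent_derivative_C_mul_X_pow {R : Type*} [CommRing R] (a : R) (k : ℕ) :
    toLaurent (derivative (Polynomial.C a * X ^ k))
      = LaurentPolynomial.C (a * k) * T ((k : ℤ) - 1) := by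
  rcases k with _ | k
  · simp
  · rw [derivative_C_mul_X_pow, toLaurent_C_mul_X_pow]
    simp

open Polynomial LaurentPolynomial in
theorem toLaurent_derivative_derivative_C_mul_X_pow {R : Type*} [CommRing R] (a : R) (k : ℕ) :
    toLaurent (derivative (derivative (Polynomial.C a * X ^ k)))
      = LaurentPolynomial.C (a * k * (k - 1)) * T ((k : ℤ) - 2) := by
  rcases k with _ | k
  · simp
  · rw [derivative_C_mul_X_pow, toLaurent_derivative_C_mul_X_pow]
    simp only [Nat.add_sub_cancel, Nat.cast_add, Nat.cast_one, add_sub_cancel_right]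
    congr 2
    ring

open Polynomial LaurentPolynomial in
/-- The first derivative of `X ^ N * p (1 / X)`. -/
theorem toLaurent_derivative_reflect {R : Type*} [CommRing R] (N : ℕ) (p : R[X])
    (hp : p.natDegree ≤ N) :
    toLaurent (derivative (reflect N p))
      = LaurentPolynomial.C (N : R) * T ((N : ℤ) - 1) * invert (toLaurent p)
        - T ((N : ℤ) - 2) * invert (toLaurent (derivative p)) := by
  refine induction_with_natDegree_le (fun p => toLaurent (derivative (reflect N p))
      = LaurentPolynomial.C (N : R) * T ((N : ℤ) - 1) * invert (toLaurent p)
        - T ((N : ℤ) - 2) * invert (toLaurent (derivative p))) N (by simp) ?_ ?_ p hp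
  · intro k a _ hk
    rw [reflect_C_mul_X_pow, revAt_le hk, toLaurent_derivative_C_mul_X_pow,
      toLaurent_derivative_C_mul_X_pow, toLaurent_C_mul_X_pow]
    simp only [map_mul, invert_C, invert_T, Nat.cast_sub hk, map_sub]
    have h1 : (T ((N : ℤ) - k - 1) : R[T;T⁻¹]) = T ((N : ℤ) - 1) * T (-(k : ℤ)) := by
      rw [← T_add]; congr 1; ring
    have h2 : (T ((N : ℤ) - 1) : R[T;T⁻¹]) * T (-(k : ℤ))
        = T ((N : ℤ) - 2) * T (-((k : ℤ) - 1)) := by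
      rw [← T_add, ← T_add]; congr 1; ring
    rw [h1]
    linear_combination (-LaurentPolynomial.C a * LaurentPolynomial.C (k : R)) * h2
  · intro f g _ _ hf hg
    simp only [reflect_add, map_add] at hf hg ⊢
    rw [hf, hg]
    ring

open Polynomial LaurentPolynomial in
/-- The second derivative of `X ^ N * p (1 / X)`. -/
theorem toLaurent_derivative_derivative_reflect {R : Type*} [CommRing R] (N : ℕ) (p : R[X])
    (hp : p.natDegree ≤ N) :
    toLaurent (derivative (derivative (reflect N p)))
      = LaurentPolynomial.C ((N : R) * (N - 1)) * T ((N : ℤ) - 2) * invert (toLaurent p)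
        - LaurentPolynomial.C (2 * ((N : R) - 1)) * T ((N : ℤ) - 3)
          * invert (toLaurent (derivative p))
        + T ((N : ℤ) - 4) * invert (toLaurent (derivative (derivative p))) := by
  refine induction_with_natDegree_le (fun p => toLaurent (derivative (derivative (reflect N p)))
      = LaurentPolynomial.C ((N : R) * (N - 1)) * T ((N : ℤ) - 2) * invert (toLaurent p)
        - LaurentPolynomial.C (2 * ((N : R) - 1)) * T ((N : ℤ) - 3)
          * invert (toLaurent (derivative p))
        + T ((N : ℤ) - 4) * invert (toLaurent (derivative (derivative p)))) N (by simp) ?_ ?_ p hp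
  · intro k a _ hk
    rw [reflect_C_mul_X_pow, revAt_le hk, toLaurent_derivative_derivative_C_mul_X_pow,
      toLaurent_derivative_derivative_C_mul_X_pow, toLaurent_derivative_C_mul_X_pow,
      toLaurent_C_mul_X_pow]
    simp only [map_mul, invert_C, invert_T, Nat.cast_sub hk, map_sub, map_one]
    have h1 : (T ((N : ℤ) - k - 2) : R[T;T⁻¹]) = T ((N : ℤ) - 2) * T (-(k : ℤ)) := by
      rw [← T_add]; congr 1; ring
    have h2 : (T ((N : ℤ) - 2) : R[T;T⁻¹]) * T (-(k : ℤ))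
        = T ((N : ℤ) - 3) * T (-((k : ℤ) - 1)) := by
      rw [← T_add, ← T_add]; congr 1; ring
    have h3 : (T ((N : ℤ) - 2) : R[T;T⁻¹]) * T (-(k : ℤ))
        = T ((N : ℤ) - 4) * T (-((k : ℤ) - 2)) := by
      rw [← T_add, ← T_add]; congr 1; ring
    have hC2 : LaurentPolynomial.C (2 : R) = 2 := map_ofNat _ 2
    rw [h1, hC2]
    linear_combination
      (-2 * LaurentPolynomial.C a * LaurentPolynomial.C (k : R)
        * (LaurentPolynomial.C (N : R) - 1)) * h2
      + (LaurentPolynomial.C a * LaurentPolynomial.C (k : R)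
        * (LaurentPolynomial.C (k : R) - 1)) * h3
  · intro f g _ _ hf hg
    simp only [reflect_add, map_add] at hf hg ⊢
    rw [hf, hg]
    ring

open Polynomial LaurentPolynomial in
/-- The Hessian `N p p'' + (1 - N) p' ^ 2` is a covariant for the reversal of coefficients. -/
theorem toLaurent_hessian_reverse {R : Type*} [CommRing R] (p : R[X]) (N : ℕ)
    (hp : p.natDegree = N) :
    toLaurent (Polynomial.C (N : R) * (p.reverse * derivative (derivative p.reverse))
          + Polynomial.C (1 - (N : R)) * (derivative p.reverse) ^ 2)
      = T (2 * ((N : ℤ) - 2)) *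
        invert (toLaurent (Polynomial.C (N : R) * (p * derivative (derivative p))
          + Polynomial.C (1 - (N : R)) * (derivative p) ^ 2)) := by
  have h0 := toLaurent_reverse p
  have h1 := toLaurent_derivative_reflect N p hp.le
  have h2 := toLaurent_derivative_derivative_reflect N p hp.le
  have hr : reflect N p = p.reverse := by rw [← hp]; rfl
  have hC2 : LaurentPolynomial.C (2 : R) = 2 := map_ofNat _ 2
  have e1 : (T ((N : ℤ) - 1) : R[T;T⁻¹]) = T N * T (-1) := T_sub _ _
  have e2 : (T ((N : ℤ) - 2) : R[T;T⁻¹]) = T N * T (-1) ^ 2 := by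
    rw [T_pow, ← T_add]; congr 1
  have e3 : (T ((N : ℤ) - 3) : R[T;T⁻¹]) = T N * T (-1) ^ 3 := by
    rw [T_pow, ← T_add]; congr 1
  have e4 : (T ((N : ℤ) - 4) : R[T;T⁻¹]) = T N * T (-1) ^ 4 := by
    rw [T_pow, ← T_add]; congr 1
  have e5 : (T (2 * ((N : ℤ) - 2)) : R[T;T⁻¹]) = T N ^ 2 * T (-1) ^ 4 := by
    rw [T_pow, T_pow, ← T_add]; congr 1; push_cast; ring
  rw [hr] at h1 h2
  simp only [map_add, map_mul, map_pow, toLaurent_C, map_sub, map_one, invert_C, h0, h1, h2, hp,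
    e1, e2, e3, e4, e5, hC2]
  ring

open Polynomial in
theorem eval_reverse_eq_pow_mul {K : Type*} [Field K] (p : K[X]) {x : K} (hx : x ≠ 0) :
    p.reverse.eval x = x ^ p.natDegree * p.eval (1 / x) := by
  have hy : 1 / x ≠ 0 := one_div_ne_zero hx
  let _ := invertibleOfNonzero hy
  have h := eval₂_reverse_mul_pow (RingHom.id K) (1 / x) p
  simp only [invOf_eq_inv, one_div, inv_inv] at h
  rw [eval, eval, one_div, ← h, mul_comm, mul_assoc, ← mul_pow, inv_mul_cancel₀ hx]
  simp

open Polynomial LaurentPolynomial in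
theorem eval₂_invert_toLaurent {K : Type*} [Field K] (p : K[X]) (x : Kˣ) :
    LaurentPolynomial.eval₂ (RingHom.id K) x (invert (toLaurent p)) = p.eval (1 / (x : K)) := by
  induction p using Polynomial.induction_on' with
  | add f g hf hg => simp only [map_add, hf, hg, eval_add]
  | monomial k a =>
    rw [toLaurent_C_mul_T, map_mul, invert_C, invert_T, eval₂_C_mul_T_neg_n, eval_monomial]
    simp

open Polynomial in
theorem eval_hessian_reverse {K : Type*} [Field K] (p : K[X]) (N : ℕ) (hp : p.natDegree = N)
    {x : K} (hx : x ≠ 0) :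
    (C (N : K) * (p.reverse * derivative (derivative p.reverse))
          + C (1 - (N : K)) * (derivative p.reverse) ^ 2).eval x
      = x ^ (2 * ((N : ℤ) - 2)) * (C (N : K) * (p * derivative (derivative p))
          + C (1 - (N : K)) * (derivative p) ^ 2).eval (1 / x) := by
  have h := congrArg (LaurentPolynomial.eval₂ (RingHom.id K) (Units.mk0 x hx))
    (toLaurent_hessian_reverse p N hp)
  rw [map_mul, eval₂_invert_toLaurent, LaurentPolynomial.eval₂_toLaurent,
    LaurentPolynomial.eval₂_T, Units.val_zpow_eq_zpow_val, Units.val_mk0] at h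
  exact h

open Polynomial in
theorem iteratedDeriv_two_eval_rpow (p : ℝ[X]) (N : ℕ) (hN : N ≠ 0) {x : ℝ}
    (hx : 0 < p.eval x) :
    iteratedDeriv 2 (fun t : ℝ => p.eval t ^ (1 / (N : ℝ))) x
      = p.eval x ^ (1 / (N : ℝ) - 2) / (N : ℝ) ^ 2
        * (C (N : ℝ) * (p * derivative (derivative p))
          + C (1 - (N : ℝ)) * (derivative p) ^ 2).eval x := by
  have hN' : (N : ℝ) ≠ 0 := Nat.cast_ne_zero.mpr hN
  have hpos : ∀ᶠ t in nhds x, 0 < p.eval t :=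
    p.continuous.continuousAt.eventually (lt_mem_nhds hx)
  have hd : deriv (fun t : ℝ => p.eval t ^ (1 / (N : ℝ))) =ᶠ[nhds x]
      fun t => p.derivative.eval t * (1 / (N : ℝ)) * p.eval t ^ (1 / (N : ℝ) - 1) := by
    filter_upwards [hpos] with t ht
    exact ((p.hasDerivAt t).rpow_const (Or.inl ht.ne')).deriv
  rw [iteratedDeriv_succ, iteratedDeriv_one, hd.deriv_eq]
  have h := (((p.derivative.hasDerivAt x).mul_const (1 / (N : ℝ))).mul
    ((p.hasDerivAt x).rpow_const (p := 1 / (N : ℝ) - 1) (Or.inl hx.ne'))).deriv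
  refine Eq.trans h ?_
  have e : p.eval x ^ (1 / (N : ℝ) - 1) = p.eval x ^ (1 / (N : ℝ) - 2) * p.eval x := by
    rw [← Real.rpow_add_one hx.ne']; congr 1; ring
  have he : (1 / (N : ℝ) - 1 - 1) = 1 / (N : ℝ) - 2 := by ring
  rw [he, e]
  simp only [eval_add, eval_mul, eval_C, eval_pow]
  field_simp

/-- The perspective `x ↦ x * f (1 / x)` of a concave function is concave. -/
theorem ConcaveOn.mul_comp_one_div {f : ℝ → ℝ} (hf : ConcaveOn ℝ (Set.Ioi 0) f) :
    ConcaveOn ℝ (Set.Ioi 0) (fun x => x * f (1 / x)) := by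
  refine ⟨convex_Ioi 0, fun x hx y hy a b ha hb hab => ?_⟩
  have hx' : 0 < x := hx
  have hy' : 0 < y := hy
  have hz : 0 < a * x + b * y := (convex_Ioi (0 : ℝ)) hx hy ha hb hab
  have ha' : 0 ≤ a * x / (a * x + b * y) := by positivity
  have hb' : 0 ≤ b * y / (a * x + b * y) := by positivity
  have h := hf.2 (Set.mem_Ioi.mpr (one_div_pos.mpr hx')) (Set.mem_Ioi.mpr (one_div_pos.mpr hy'))
    ha' hb' (by rw [← add_div, div_self hz.ne'])
  simp only [smul_eq_mul] at h ⊢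
  have e : a * x / (a * x + b * y) * (1 / x) + b * y / (a * x + b * y) * (1 / y)
      = 1 / (a * x + b * y) := by
    field_simp
    exact hab
  rw [e] at h
  refine le_trans (le_of_eq ?_) (mul_le_mul_of_nonneg_left h hz.le)
  field_simp

theorem MuConcaveOn.pow_mul_comp_one_div {u v : ℝ → ℝ} {N : ℕ} (hN : N ≠ 0)
    (hu : MuConcaveOn (Set.Ioi 0) (1 / (N : ℝ)) u)
    (huv : ∀ x : ℝ, 0 < x → v x = x ^ N * u (1 / x)) :
    MuConcaveOn (Set.Ioi 0) (1 / (N : ℝ)) v := by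
  refine ⟨fun x hx => ?_, hu.2.mul_comp_one_div.congr fun x hx => ?_⟩
  · rw [huv x hx]
    exact mul_pos (pow_pos hx N) (hu.1 _ (Set.mem_Ioi.mpr (one_div_pos.mpr hx)))
  · have hx' : 0 < x := hx
    have hux := hu.1 _ (Set.mem_Ioi.mpr (one_div_pos.mpr hx'))
    simp only [huv x hx']
    rw [Real.mul_rpow (pow_nonneg hx'.le N) hux.le, one_div (N : ℝ),
      Real.pow_rpow_inv_natCast hx'.le hN]

open Polynomial in
theorem stmt4 (P : Polynomial ℝ) (n : ℕ) (hn : 1 ≤ n) (hdeg : P.natDegree = n) :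
    -- the identity in `ℝ[X, X⁻¹]`; `LaurentPolynomial.invert` is the substitution `X ↦ 1/X`
    (toLaurent (C (n : ℝ) * (P.reverse * derivative (derivative P.reverse))
          + C (1 - (n : ℝ)) * (derivative P.reverse) ^ 2)
      = LaurentPolynomial.T (2 * ((n : ℤ) - 2)) *
        LaurentPolynomial.invert (toLaurent
          (C (n : ℝ) * (P * derivative (derivative P)) + C (1 - (n : ℝ)) * (derivative P) ^ 2)))
    ∧ ((∀ x : ℝ, 0 < x → 0 < P.eval x) → ∀ x : ℝ, 0 < x →
        SignType.sign (iteratedDeriv 2 (fun t : ℝ => P.reverse.eval t ^ (1 / (n : ℝ))) x)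
          = SignType.sign (iteratedDeriv 2 (fun t : ℝ => P.eval t ^ (1 / (n : ℝ))) (1 / x)))
    ∧ (MuConcaveOn (Set.Ioi 0) (1 / (n : ℝ)) (fun x => P.eval x) ↔
        MuConcaveOn (Set.Ioi 0) (1 / (n : ℝ)) (fun x => P.reverse.eval x)) := by
  have hn0 : n ≠ 0 := by omega
  have hnpos : (0 : ℝ) < n := Nat.cast_pos.mpr hn
  have hrev : ∀ x : ℝ, 0 < x → P.reverse.eval x = x ^ n * P.eval (1 / x) := fun x hx => by
    rw [eval_reverse_eq_pow_mul P hx.ne', hdeg]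
  refine ⟨toLaurent_hessian_reverse P n hdeg, fun hP x hx => ?_, fun h => ?_, fun h => ?_⟩
  · have hPx := hP (1 / x) (one_div_pos.mpr hx)
    have hRx : 0 < P.reverse.eval x := by rw [hrev x hx]; positivity
    have hxp : 0 < x ^ (2 * ((n : ℤ) - 2)) := zpow_pos hx _
    have hc : 0 < P.reverse.eval x ^ (1 / (n : ℝ) - 2) / (n : ℝ) ^ 2 := by positivity
    have hc' : 0 < P.eval (1 / x) ^ (1 / (n : ℝ) - 2) / (n : ℝ) ^ 2 := by positivity
    rw [iteratedDeriv_two_eval_rpow _ n hn0 hRx, iteratedDeriv_two_eval_rpow _ n hn0 hPx,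
      eval_hessian_reverse P n hdeg hx.ne', sign_mul, sign_mul, sign_mul, sign_pos hc,
      sign_pos hc', sign_pos hxp, one_mul]
  · exact h.pow_mul_comp_one_div hn0 hrev
  · refine h.pow_mul_comp_one_div hn0 fun x hx => ?_
    simp only [hrev (1 / x) (one_div_pos.mpr hx), one_div_one_div]
    rw [← mul_assoc, ← mul_pow, mul_one_div_cancel hx.ne', one_pow, one_mul]
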